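/- arXiv:2401.02350 — 5 statements merged into one kernel-verified Lean document; each statement's English description precedes it below -/
import Mathlib

section
/- Let A be a countable commutative noetherian ring. Then there are only countably many isomorphism classes of finitely generated A-modules; that is, the set of isomorphism classes of objects of the category of finitely generated A-modules is countable. -/
/-!
A finitely generated module is determined up to isomorphism by a presentation `Rⁿ ⧸ S`, i.e. by a
pair `(n, S)`. Over a countable noetherian ring each `S` is the span of a finite subset of the
countable set `Rⁿ`, so there are countably many pairs. Sending a module to a chosen presentation,
rather than a pair to its quotient, works whatever universe the modules live in.
-/

open CategoryTheory

universe u v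

section Submodule

variable {R M : Type*} [Semiring R] [AddCommMonoid M] [Module R M]

theorem countable_setOf_submodule_fg [Countable M] : {N : Submodule R M | N.FG}.Countable :=
  Set.countable_range (fun s : Finset M ↦ Submodule.span R (s : Set M))

theorem countable_submodule_of_isNoetherian [IsNoetherian R M] [Countable M] :
    Countable (Submodule R M) :=
  Set.countable_univ_iff.mp <|
    countable_setOf_submodule_fg.mono fun N _ ↦ IsNoetherian.noetherian N

end Submodule

section FGModuleRepr

variable (R : Type u) [Ring R]

theorem countable_fgModuleRepr [∀ n : ℕ, Countable (Submodule R (Fin n → R))] :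
    Countable (FGModuleRepr R) := by
  refine Function.Injective.countable
    (f := fun x ↦ (⟨x.n, x.S⟩ : Σ n : ℕ, Submodule R (Fin n → R))) ?_
  rintro ⟨m, S⟩ ⟨n, T⟩ h
  cases h
  rfl

variable {R} in
theorem nonempty_iso_of_ofFinite_eq {M N : FGModuleCat.{v} R}
    (h : FGModuleRepr.ofFinite R M = FGModuleRepr.ofFinite R N) : Nonempty (M ≅ N) := by
  have eM := FGModuleRepr.ofFiniteEquiv R M
  rw [h] at eM
  exact ⟨(eM.symm.trans (FGModuleRepr.ofFiniteEquiv R N)).toFGModuleCatIso⟩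

theorem countable_skeleton_fgModuleCat [Countable (FGModuleRepr R)] :
    Countable (Skeleton (FGModuleCat.{v} R)) := by
  refine Function.Injective.countable
    (f := fun X ↦ FGModuleRepr.ofFinite R ((fromSkeleton (FGModuleCat.{v} R)).obj X)) ?_
  intro X Y h
  obtain ⟨e⟩ := nonempty_iso_of_ofFinite_eq h
  exact skeleton_skeletal _ ⟨(fromSkeleton _).preimageIso e⟩

end FGModuleRepr

theorem countable_isoClasses_fgModules_general
    (A : Type u) [Ring A] [IsNoetherianRing A] [Countable A] :
    Countable (Skeleton (FGModuleCat.{v} A)) :=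
  have (n : ℕ) : Countable (Submodule A (Fin n → A)) := countable_submodule_of_isNoetherian
  have : Countable (FGModuleRepr A) := countable_fgModuleRepr A
  countable_skeleton_fgModuleCat A

/-- Let `A` be a countable commutative noetherian ring. Then there are only countably
many isomorphism classes of finitely generated `A`-modules: the skeleton of the
category of finitely generated `A`-modules is countable. -/
theorem countable_isoClasses_fgModules
    (A : Type) [CommRing A] [IsNoetherianRing A] [Countable A] :
    Countable (CategoryTheory.Skeleton (FGModuleCat A)) :=
  countable_isoClasses_fgModules_general A
end

section
/- Let A be a commutative noetherian local ring that is complete with respect to its maximal ideal (i.e., A is m-adically complete, where m is the maximal ideal). If the Krull dimension of A is at least 2, then the set of prime ideals of A of height one is uncountable. -/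
/-!
If `A` is noetherian and `I`-adically complete, its `I`-adic topology is completely
pseudometrizable, so Baire's theorem applies. By Krull's intersection theorem every ideal is closed,
and a prime not containing `I` contains no coset of a power of `I`, so it is nowhere dense. Hence
the open set `I` is not covered by countably many primes unless one of them contains `I`. But the
primes of height at most one do cover a proper `I`, by the Hauptidealsatz, and when `I` has height
at least two none of them contains `I`. So there are uncountably many of them, and only finitely
many have height zero.
-/

section AdicTopology

variable {R : Type*} [CommRing R] [TopologicalSpace R] {I : Ideal R}

theorem baireSpace_of_isAdic [IsPrecomplete I R] (hI : IsAdic I) : BaireSpace R := by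
  have : IsTopologicalAddGroup R := by
    obtain rfl := hI
    exact I.ringFilterBasis.toAddGroupFilterBasis.isTopologicalAddGroup
  let : UniformSpace R := IsTopologicalAddGroup.rightUniformSpace R
  have : IsUniformAddGroup R := isUniformAddGroup_of_addCommGroup
  have : CompleteSpace R := hI.isPrecomplete_iff.mp inferInstance
  have : (nhds (0 : R)).IsCountablyGenerated := hI.hasBasis_nhds_zero.isCountablyGenerated
  have : (uniformity R).IsCountablyGenerated := IsUniformAddGroup.uniformity_countably_generated
  infer_instance

theorem isClosed_ideal_of_isAdic_of_le_jacobson [IsNoetherianRing R] (hI : IsAdic I)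
    (hIjac : I ≤ (⊥ : Ideal R).jacobson) (J : Ideal R) : IsClosed (J : Set R) := by
  refine isClosed_of_closure_subset fun x hx ↦ ?_
  have hausdorff : IsHausdorff I (R ⧸ J) := .of_le_jacobson I _ hIjac
  refine Ideal.Quotient.eq_zero_iff_mem.mp (hausdorff.haus _ fun n ↦ ?_)
  obtain ⟨_, ⟨y, hy, rfl⟩, hxyJ⟩ :=
    (mem_closure_iff_nhds_basis' (hI.hasBasis_nhds x)).mp hx n trivial
  have hxy : Ideal.Quotient.mk J x = (-y) • (1 : R ⧸ J) := by
    rw [Algebra.smul_def, mul_one, Ideal.Quotient.algebraMap_eq,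
      Ideal.Quotient.mk_eq_mk_iff_sub_mem, sub_neg_eq_add]
    exact hxyJ
  rw [SModEq.zero, hxy]
  exact Submodule.smul_mem_smul ((I ^ n).neg_mem hy) Submodule.mem_top

theorem interior_prime_eq_empty_of_isAdic (hI : IsAdic I) {P : Ideal R} [P.IsPrime]
    (hIP : ¬ I ≤ P) : interior (P : Set R) = ∅ := by
  refine Set.eq_empty_of_forall_notMem fun x hx ↦ hIP ?_
  obtain ⟨n, -, hn⟩ := (hI.hasBasis_nhds x).mem_iff.mp (mem_interior_iff_mem_nhds.mp hx)
  have hpow : I ^ n ≤ P := fun y hy ↦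
    (P.add_mem_iff_right (interior_subset hx)).mp (hn ⟨y, hy, rfl⟩)
  exact Ideal.IsPrime.le_of_pow_le hpow

end AdicTopology

section Noetherian

variable {R : Type*} [CommRing R] [IsNoetherianRing R]

theorem exists_le_prime_of_subset_biUnion_prime (I : Ideal R) [IsAdicComplete I R]
    {S : Set (PrimeSpectrum R)} (hS : S.Countable)
    (hIS : (I : Set R) ⊆ ⋃ p ∈ S, (p.asIdeal : Set R)) : ∃ p ∈ S, I ≤ p.asIdeal := by
  let : TopologicalSpace R := I.adicTopology
  have : NonarchimedeanRing R := I.nonarchimedean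
  have hI : IsAdic I := rfl
  have : BaireSpace R := baireSpace_of_isAdic hI
  have I_open : IsOpen (I : Set R) := by
    simpa only [pow_one] using (isAdic_iff.mp hI).1 1
  by_contra! hnot_le
  have nowhereDense (p) (hp : p ∈ S) : IsNowhereDense (p.asIdeal : Set R) :=
    (isClosed_ideal_of_isAdic_of_le_jacobson hI (IsAdicComplete.le_jacobson_bot I)
      p.asIdeal).isNowhereDense_iff.mpr (interior_prime_eq_empty_of_isAdic hI (hnot_le p hp))
  have union_meagre : IsMeagre (⋃ p ∈ S, (p.asIdeal : Set R)) :=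
    isMeagre_biUnion hS fun p hp ↦ (nowhereDense p hp).isMeagre
  exact not_isMeagre_of_isOpen I_open ⟨0, I.zero_mem⟩ (union_meagre.mono hIS)

theorem exists_prime_height_le_one_of_not_isUnit {x : R} (hx : ¬ IsUnit x) :
    ∃ p : PrimeSpectrum R, Order.height p ≤ 1 ∧ x ∈ p.asIdeal := by
  obtain ⟨p, hp⟩ := Ideal.nonempty_minimalPrimes (mt Ideal.span_singleton_eq_top.mp hx)
  refine ⟨⟨p, hp.1.1⟩, ?_, hp.1.2 (Ideal.mem_span_singleton_self x)⟩
  rw [← PrimeSpectrum.height_eq_orderHeight]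
  exact Ideal.height_le_one_of_isPrincipal_of_mem_minimalPrimes _ p hp

variable (R) in
theorem finite_setOfPred_prime_height_eq_zero :
    {p : PrimeSpectrum R | Order.height p = 0}.Finite := by
  simpa only [Order.height_eq_zero] using PrimeSpectrum.finite_setOfPred_isMin R

end Noetherian

theorem uncountable_height_one_primes_general {A : Type*} [CommRing A] [IsNoetherianRing A]
    [Nontrivial A] (I : Ideal A) [IsAdicComplete I A] (hI : 2 ≤ I.height) :
    ¬ Set.Countable {p : PrimeSpectrum A | Order.height p = 1} := by
  intro height_one_countable
  have height_le_one_countable : {p : PrimeSpectrum A | Order.height p ≤ 1}.Countable := by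
    refine ((finite_setOfPred_prime_height_eq_zero A).countable.union height_one_countable).mono
      fun p (hp : Order.height p ≤ 1) ↦ ?_
    exact Order.le_one_iff.mp hp
  have I_ne_top : I ≠ ⊤ := by
    rintro rfl
    exact not_subsingleton A (IsAdicComplete.subsingleton A ‹_›)
  have I_covered : (I : Set A) ⊆ ⋃ p ∈ {p : PrimeSpectrum A | Order.height p ≤ 1},
      (p.asIdeal : Set A) := fun x hx ↦ by
    have hx_nonunit : ¬ IsUnit x := fun hu ↦ I_ne_top (I.eq_top_of_isUnit_mem hx hu)
    simpa using exists_prime_height_le_one_of_not_isUnit hx_nonunit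
  obtain ⟨p, hp, hIp⟩ :=
    exists_le_prime_of_subset_biUnion_prime I height_le_one_countable I_covered
  have two_le_one : (2 : ℕ∞) ≤ 1 := calc
    2 ≤ I.height := hI
    _ ≤ p.asIdeal.height := Ideal.height_mono hIp
    _ = Order.height p := p.height_eq_orderHeight
    _ ≤ 1 := hp
  exact absurd two_le_one (by decide)

/-- Let `A` be a complete commutative noetherian local ring. If the Krull dimension of
`A` is at least `2`, then the set of height-one prime ideals of `A` is uncountable. -/
theorem uncountable_height_one_primes
    (A : Type) [CommRing A] [IsNoetherianRing A] [IsLocalRing A]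
    [IsAdicComplete (IsLocalRing.maximalIdeal A) A]
    (h : 2 ≤ ringKrullDim A) :
    ¬ Set.Countable {p : PrimeSpectrum A | Order.height p = 1} := by
  rw [← IsLocalRing.maximalIdeal_height_eq_ringKrullDim] at h
  exact uncountable_height_one_primes_general (IsLocalRing.maximalIdeal A) (WithBot.coe_le_coe.mp h)
end

section
/- Countable prime avoidance: let A be a commutative noetherian local ring that is complete with respect to its maximal ideal, let (p_i)_{i ∈ ℕ} be a countable family of prime ideals of A, and let I be an ideal of A with I ⊆ ⋃_i p_i. Then I ⊆ p_i for some i. -/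
/-! For the `J`-adic topology `A` is a complete metrizable group, and all its ideals are closed by
Krull's intersection theorem. If countably many ideals `q i` cover an ideal `I`, Baire's theorem
on `I` makes some `q i ∩ I` open in `I`, that is, `I ⊓ J ^ n ≤ q i` for some `n`. If `q i` is prime
and `I ≤ J`, this forces `I ≤ q i`. -/

open Set
open scoped Uniformity

@[to_additive]
theorem exists_isOpen_subgroup_of_iUnion_eq_univ {G : Type*} [Group G] [TopologicalSpace G]
    [ContinuousMul G] [BaireSpace G] {ι : Sort*} [Countable ι] {K : ι → Subgroup G}
    (hK : ∀ i, IsClosed (K i : Set G)) (hcover : ⋃ i, (K i : Set G) = univ) :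
    ∃ i, IsOpen (K i : Set G) := by
  obtain ⟨i, x, hx⟩ := nonempty_interior_of_iUnion_of_closed hK hcover
  exact ⟨i, (K i).isOpen_of_mem_nhds (mem_interior_iff_mem_nhds.mp hx)⟩

section AdicTopology

variable {A : Type*} [CommRing A] {J : Ideal A}

theorem isClosed_ideal_of_isHausdorff_quotient [TopologicalSpace A] (hJ : IsAdic J) (I : Ideal A)
    [IsHausdorff J (A ⧸ I)] : IsClosed (I : Set A) := by
  refine isClosed_of_closure_subset fun x hx ↦ ?_
  rw [SetLike.mem_coe, ← Ideal.Quotient.eq_zero_iff_mem]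
  refine IsHausdorff.haus ‹_› _ fun n ↦ SModEq.zero.mpr ?_
  obtain ⟨_, hxz, z, hz, rfl⟩ := (mem_closure_iff_nhds_basis (hJ.hasBasis_nhds x)).mp hx n trivial
  have mk_x : Ideal.Quotient.mk I x = (-z) • (1 : A ⧸ I) := by
    rw [Algebra.smul_def, mul_one, Ideal.Quotient.algebraMap_eq,
      Ideal.Quotient.mk_eq_mk_iff_sub_mem, sub_neg_eq_add]
    exact hxz
  rw [mk_x]
  exact Submodule.smul_mem_smul (neg_mem hz) trivial

theorem baireSpace_coe_of_isClosed_of_isAdic [IsPrecomplete J A] [UniformSpace A]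
    [IsUniformAddGroup A] (hJ : IsAdic J) {s : Set A} (hs : IsClosed s) : BaireSpace s := by
  have := hJ.hasBasis_nhds_zero.isCountablyGenerated
  have : (𝓤 A).IsCountablyGenerated := IsUniformAddGroup.uniformity_countably_generated
  have : CompleteSpace A := hJ.isPrecomplete_iff.mp ‹_›
  have : CompleteSpace s := hs.completeSpace_coe
  infer_instance

theorem exists_inf_pow_le_of_isOpen_preimage_val [TopologicalSpace A] (hJ : IsAdic J)
    {I q : Ideal A} (hopen : IsOpen (Subtype.val ⁻¹' (q : Set A) : Set I)) :
    ∃ n, I ⊓ J ^ n ≤ q := by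
  have hnhds := hopen.mem_nhds (x := 0) (zero_mem q)
  rw [nhds_subtype, ZeroMemClass.coe_zero] at hnhds
  obtain ⟨n, -, hn⟩ := (hJ.hasBasis_nhds_zero.comap _).mem_iff.mp hnhds
  exact ⟨n, fun x ⟨hxI, hxJ⟩ ↦ hn (a := ⟨x, hxI⟩) hxJ⟩

theorem exists_inf_pow_le_of_subset_iUnion (J : Ideal A) [IsPrecomplete J A]
    {ι : Sort*} [Countable ι] {q : ι → Ideal A} [∀ i, IsHausdorff J (A ⧸ q i)]
    {I : Ideal A} [IsHausdorff J (A ⧸ I)] (hI : (I : Set A) ⊆ ⋃ i, (q i : Set A)) :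
    ∃ i n, I ⊓ J ^ n ≤ q i := by
  let : WithIdeal A := ⟨J⟩
  have hJ : IsAdic J := rfl
  have : BaireSpace I :=
    baireSpace_coe_of_isClosed_of_isAdic hJ (isClosed_ideal_of_isHausdorff_quotient hJ I)
  let K (i : ι) : AddSubgroup I := (Submodule.comap I.subtype (q i)).toAddSubgroup
  have hK (i : ι) : IsClosed (K i : Set I) :=
    (isClosed_ideal_of_isHausdorff_quotient hJ (q i)).preimage continuous_subtype_val
  have hcover : ⋃ i, (K i : Set I) = univ := eq_univ_of_forall fun x ↦
    have ⟨i, hi⟩ := mem_iUnion.mp (hI x.2)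
    mem_iUnion_of_mem i hi
  obtain ⟨i, hi⟩ := exists_isOpen_addSubgroup_of_iUnion_eq_univ hK hcover
  exact ⟨i, exists_inf_pow_le_of_isOpen_preimage_val hJ hi⟩

end AdicTopology

theorem countable_prime_avoidance_general {A : Type*} [CommRing A] [IsNoetherianRing A]
    {J : Ideal A} [IsAdicComplete J A] {ι : Sort*} [Countable ι] {p : ι → Ideal A}
    (hp : ∀ i, (p i).IsPrime) {I : Ideal A} (hIJ : I ≤ J)
    (hI : (I : Set A) ⊆ ⋃ i, (p i : Set A)) : ∃ i, I ≤ p i := by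
  have isHausdorff_quotient (K : Ideal A) : IsHausdorff J (A ⧸ K) :=
    .of_le_jacobson J _ (IsAdicComplete.le_jacobson_bot J)
  obtain ⟨i, n, hle⟩ := exists_inf_pow_le_of_subset_iUnion J hI
  exact ⟨i, ((hp i).inf_le.mp hle).elim id fun hJn ↦ hIJ.trans ((hp i).le_of_pow_le hJn)⟩

/-- Countable prime avoidance: let `A` be a complete commutative noetherian local
ring, `(p i)` a countable family of prime ideals of `A`, and `I` an ideal of `A`
contained in the union of the `p i`. Then `I ⊆ p i` for some `i`. -/
theorem countable_prime_avoidance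
    (A : Type) [CommRing A] [IsNoetherianRing A] [IsLocalRing A]
    [IsAdicComplete (IsLocalRing.maximalIdeal A) A]
    (p : ℕ → Ideal A) (hp : ∀ i, (p i).IsPrime)
    (I : Ideal A) (hI : (I : Set A) ⊆ ⋃ i, (p i : Set A)) :
    ∃ i, I ≤ p i :=
  countable_prime_avoidance_general hp
    (hI.trans (iUnion_subset fun i ↦ IsLocalRing.le_maximalIdeal (hp i).ne_top)) hI
end

section
/- Let R be a commutative noetherian ring and S an associative ring equipped with an R-algebra structure such that S is finitely generated as an R-module. Then every family of pairwise orthogonal nonzero idempotents in S is finite. -/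
/-!
Right multiplication by `e ∈ E` kills the span of `E \ {e}` but not `e` itself, so `E` is an
irredundant generating set of its span. In a noetherian module such a set is finite, because some
finite subset of it already spans.
-/

theorem finite_of_forall_notMem_span_sdiff_singleton {R M : Type*} [Semiring R] [AddCommMonoid M]
    [Module R M] [IsNoetherian R M] {s : Set M}
    (hs : ∀ x ∈ s, x ∉ Submodule.span R (s \ {x})) : s.Finite := by
  obtain ⟨t, hts, hspan⟩ := (Submodule.fg_span_iff_fg_span_finset_subset s).1
    (IsNoetherian.noetherian (Submodule.span R s))
  refine t.finite_toSet.subset fun x hx ↦ by_contra fun hxt ↦ hs x hx ?_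
  have hx_span : x ∈ Submodule.span R (t : Set M) := hspan ▸ Submodule.subset_span hx
  exact Submodule.span_mono (Set.subset_sdiff_singleton hts hxt) hx_span

section Orthogonal

variable (R : Type*) {S : Type*} [Semiring R] [NonUnitalNonAssocSemiring S] [Module R S]
  [IsScalarTower R S S]

theorem notMem_span_sdiff_singleton_of_pairwise_mul_eq_zero {E : Set S}
    (horth : E.Pairwise (· * · = 0)) {e : S} (he : e ∈ E) (hsq : e * e ≠ 0) :
    e ∉ Submodule.span R (E \ {e}) := by
  have hker : Submodule.span R (E \ {e}) ≤ LinearMap.ker (LinearMap.mulRight R e) :=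
    Submodule.span_le.2 fun _ hf ↦ horth hf.1 he hf.2
  exact fun hmem ↦ hsq (hker hmem)

theorem finite_orthogonal_idempotents_general [IsNoetherian R S] {E : Set S}
    (hsq : ∀ e ∈ E, e * e ≠ 0) (horth : E.Pairwise (· * · = 0)) : E.Finite :=
  finite_of_forall_notMem_span_sdiff_singleton (R := R) fun e he ↦
    notMem_span_sdiff_singleton_of_pairwise_mul_eq_zero R horth he (hsq e he)

end Orthogonal

/-- Let `R` be a commutative noetherian ring and `S` an associative `R`-algebra that
is finitely generated as an `R`-module. Then every family of pairwise orthogonal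
nonzero idempotents in `S` is finite. -/
theorem finite_orthogonal_idempotents
    (R : Type) [CommRing R] [IsNoetherianRing R]
    (S : Type) [Ring S] [Algebra R S] [Module.Finite R S]
    (E : Set S)
    (hidem : ∀ e ∈ E, e * e = e)
    (hne : ∀ e ∈ E, e ≠ 0)
    (horth : ∀ e ∈ E, ∀ f ∈ E, e ≠ f → e * f = 0 ∧ f * e = 0) :
    E.Finite :=
  finite_orthogonal_idempotents_general R (fun e he ↦ (hidem e he).symm ▸ hne e he)
    fun e he f hf hef ↦ (horth e he f hf hef).1
end

section
/- Let R be a commutative noetherian ring and M a module over a ring S such that the endomorphism ring End_S(M) carries an R-algebra structure making it a finitely generated R-module. Then every direct sum decomposition of M into nonzero S-submodules has only finitely many summands; in particular, M has only finitely many indecomposable direct summands in any such decomposition. -/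
/-!
The projections onto the summands are nonzero orthogonal idempotents of `End_S(M)`, so the left
ideals they generate are nonzero and independent. As `End_S(M)` is finite over a noetherian ring,
it is left noetherian, and only finitely many nonzero left ideals can be independent.
-/

section OrthogonalIdempotents

variable {A I : Type*} [Semiring A] {e : I → A}

theorem iSupIndep_span_singleton_of_orthogonalIdempotents (he : OrthogonalIdempotents e) :
    iSupIndep fun i ↦ Ideal.span {e i} := by
  intro i
  rw [Submodule.disjoint_def]
  intro x hx_span hx_iSup
  -- Right multiplication by `e i` fixes `A e i` and kills every other `A e j`.
  have hx_fixed : x * e i = x := by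
    obtain ⟨a, rfl⟩ := Ideal.mem_span_singleton'.1 hx_span
    rw [mul_assoc, he.idem i]
  have iSup_le_ker : ⨆ j, ⨆ (_ : j ≠ i), Ideal.span {e j} ≤
      LinearMap.ker (LinearMap.toSpanSingleton A A (e i)) :=
    iSup₂_le fun j hj ↦ (Ideal.span_singleton_le_iff_mem _).2 (he.ortho hj)
  have hx_killed : x * e i = 0 := iSup_le_ker hx_iSup
  rw [← hx_fixed, hx_killed]

theorem finite_of_orthogonalIdempotents_of_ne_zero [IsNoetherianRing A]
    (he : OrthogonalIdempotents e) (hne : ∀ i, e i ≠ 0) : Finite I :=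
  WellFoundedGT.finite_of_iSupIndep (iSupIndep_span_singleton_of_orthogonalIdempotents he)
    fun i h ↦ hne i (Ideal.span_singleton_eq_bot.1 h)

end OrthogonalIdempotents

section SummandProjection

open DirectSum

variable {S M I : Type*} [Semiring S] [AddCommMonoid M] [Module S M] [DecidableEq I]
  (N : I → Submodule S M)

/-- The projection of `M = ⨁ i, N i` onto the summand `N i`, regarded as an endomorphism of `M`
so that the projections can be multiplied in `Module.End S M`. -/
def summandProjection [Decomposition N] (i : I) : Module.End S M :=
  (N i).subtype ∘ₗ component S I (fun j ↦ N j) i ∘ₗ (decomposeLinearEquiv N).toLinearMap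

theorem summandProjection_apply [Decomposition N] (i : I) (m : M) :
    summandProjection N i m = decompose N m i :=
  rfl

theorem orthogonalIdempotents_summandProjection [Decomposition N] :
    OrthogonalIdempotents (summandProjection N) where
  idem i := LinearMap.ext fun m ↦ decompose_of_mem_same N (decompose N m i).2
  ortho _ j hij := LinearMap.ext fun m ↦ decompose_of_mem_ne N (decompose N m j).2 hij.symm

theorem summandProjection_ne_zero [Decomposition N] {i : I} (hi : N i ≠ ⊥) :
    summandProjection N i ≠ 0 := by
  obtain ⟨x, hx, hx_ne⟩ := Submodule.exists_mem_ne_zero_of_ne_bot hi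
  intro h
  apply hx_ne
  rw [← decompose_of_mem_same N hx, ← summandProjection_apply, h, LinearMap.zero_apply]

variable {N}

theorem finite_summands_of_finite_endomorphism_ring_general [IsNoetherianRing (Module.End S M)]
    (hinternal : IsInternal N) (hne : ∀ i, N i ≠ ⊥) : Finite I :=
  letI := hinternal.chooseDecomposition
  finite_of_orthogonalIdempotents_of_ne_zero (orthogonalIdempotents_summandProjection N)
    fun i ↦ summandProjection_ne_zero N (hne i)

end SummandProjection

/-- Let `R` be a commutative noetherian ring, `S` a ring, and `M` an `S`-module whose
endomorphism ring `End_S(M)` carries an `R`-algebra structure making it a finitely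
generated `R`-module. Then every direct sum decomposition of `M` into nonzero
`S`-submodules has only finitely many summands. -/
theorem finite_summands_of_finite_endomorphism_ring
    (R : Type) [CommRing R] [IsNoetherianRing R]
    (S : Type) [Ring S] (M : Type) [AddCommGroup M] [Module S M]
    [Algebra R (Module.End S M)] [Module.Finite R (Module.End S M)]
    (I : Type) [DecidableEq I] (N : I → Submodule S M)
    (hinternal : DirectSum.IsInternal N)
    (hne : ∀ i, N i ≠ ⊥) :
    Finite I :=
  have := IsNoetherianRing.of_finite R (Module.End S M)
  finite_summands_of_finite_endomorphism_ring_general hinternal hne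
end
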